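/- Let G be a finite abelian group with D(G) = D*(G) (in particular, this holds when G is a p-group) and let k ∈ ℕ₀. If r(G) ≥ exp(G) + 1 − k, then SD_k(G) = D*(G). -/

import Mathlib

open Multiset

/-- A sequence (finite multiset) over `G` is zero-sumfree if every nonempty
subsequence has nonzero sum. -/
def IsZeroSumfree {G : Type*} [AddCommMonoid G] (S : Multiset G) : Prop :=
  ∀ T ≤ S, T ≠ 0 → T.sum ≠ 0

/-- A minimal zero-sum sequence: a nonempty sequence with sum zero all of whose
nonempty proper subsequences have nonzero sum. -/
def IsMinimalZeroSum {G : Type*} [AddCommMonoid G] (S : Multiset G) : Prop :=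
  S ≠ 0 ∧ S.sum = 0 ∧ ∀ T ≤ S, T ≠ 0 → T ≠ S → T.sum ≠ 0

/-- The cumulated multiplicity of level `ℓ` of a sequence:
`cm_ℓ(S) = Σ_{g ∈ G} max {0, v_g(S) − ℓ}`. -/
noncomputable def cmul {G : Type*} [AddCommMonoid G] (ℓ : ℕ) (S : Multiset G) : ℕ :=
  letI := Classical.decEq G
  ∑ g ∈ S.toFinset, (S.count g - ℓ)

/-- `SD_{(k,ℓ)}(G)`: the maximum length of a minimal zero-sum sequence `S` over `G`
with `cm_ℓ(S) ≤ k`. -/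
noncomputable def SDpair (G : Type*) [AddCommMonoid G] (k ℓ : ℕ) : ℕ :=
  sSup {m | ∃ S : Multiset G, IsMinimalZeroSum S ∧ cmul ℓ S ≤ k ∧ Multiset.card S = m}

/-- `SD_k(G)`: the `k`-th Strong Davenport constant. -/
noncomputable def SDk (G : Type*) [AddCommMonoid G] (k : ℕ) : ℕ := SDpair G k 1

/-- The Strong Davenport constant `SD(G) = SD_0(G)`. -/
noncomputable def SD (G : Type*) [AddCommMonoid G] : ℕ := SDk G 0

/-- The Olson constant `Ol(G) = SD_1(G)`. -/
noncomputable def Ol (G : Type*) [AddCommMonoid G] : ℕ := SDk G 1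

/-- `ol_k(G)`: the maximum length of a zero-sumfree sequence `S` over `G` with
`cm(S) ≤ k`. -/
noncomputable def olk (G : Type*) [AddCommMonoid G] (k : ℕ) : ℕ :=
  sSup {m | ∃ S : Multiset G, IsZeroSumfree S ∧ cmul 1 S ≤ k ∧ Multiset.card S = m}

/-- `Ol_k(G)`: the smallest integer `ℓ` such that every sequence `S` over `G` with
`cm(S) ≤ k` and `|S| ≥ ℓ` has a nonempty zero-sum subsequence. -/
noncomputable def Olk (G : Type*) [AddCommMonoid G] (k : ℕ) : ℕ :=
  sInf {m | ∀ S : Multiset G, cmul 1 S ≤ k → m ≤ Multiset.card S →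
    ∃ T, T ≤ S ∧ T ≠ 0 ∧ T.sum = 0}

/-- The Davenport constant `D(G)`: the maximum length of a minimal zero-sum
sequence over `G`. -/
noncomputable def DavenportD (G : Type*) [AddCommMonoid G] : ℕ :=
  sSup {m | ∃ S : Multiset G, IsMinimalZeroSum S ∧ Multiset.card S = m}

/-!
The upper bound `SD_k(G) ≤ D(G)` is immediate, so the point is to construct a minimal zero-sum
sequence of length `D*(G)` with few repetitions. It is built by adjoining the cyclic factors from
the largest to the smallest. If `h R` is a minimal zero-sum sequence over `H` and
`a_1 + ⋯ + a_m = h`, then replacing `h` by the terms `(1, a_1), …, (1, a_m)` gives a minimal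
zero-sum sequence over `C_m ⊕ H` that is longer by `m - 1`. Removing a repeated term `h` lowers the
cumulated multiplicity by one, and nothing is lost again if the `a_i` are distinct: take
`0, f, …, (m - 2) f` and the term completing the sum to `h`, for a basis element `f` with `h ∉ ⟨f⟩`.
Such an `f` exists once `H` has rank at least two; in rank one the completing term may cost one
repetition. Starting from `g^n` over `C_n`, with cumulated multiplicity `n - 1`, rank `r ≥ 2` is
reached with cumulated multiplicity at most `n - (r - 1)`.
-/

section Submultiset

variable {α β : Type*}

lemma exists_le_map_eq_of_le_map {f : α → β} {U : Multiset α} {T : Multiset β}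
    (hT : T ≤ U.map f) : ∃ B ≤ U, B.map f = T := by
  induction U, T using Quotient.inductionOn₂ with
  | _ u t =>
    obtain ⟨t', ht', hsub⟩ := hT
    obtain ⟨b, hb, rfl⟩ := List.sublist_map_iff.1 hsub
    exact ⟨b, hb.subperm, Quot.sound ht'⟩

lemma exists_add_eq_of_le_add {T U V : Multiset α} (hT : T ≤ U + V) :
    ∃ B ≤ U, ∃ C ≤ V, B + C = T := by
  classical
  refine ⟨T ∩ U, inter_le_right, T - U, tsub_le_iff_left.2 hT, ?_⟩
  rw [add_comm, sub_add_inter]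

end Submultiset

section CumulatedMultiplicity

variable {G H : Type*} [AddCommMonoid G] [AddCommMonoid H] {S T : Multiset G} (ℓ : ℕ)

lemma cmul_eq_sum_of_subset [DecidableEq G] {s : Finset G} (hs : S.toFinset ⊆ s) :
    cmul ℓ S = ∑ g ∈ s, (S.count g - ℓ) := by
  have hsum : cmul ℓ S = ∑ g ∈ S.toFinset, (S.count g - ℓ) := by
    rw [cmul]
    congr!
  rw [hsum]
  refine Finset.sum_subset hs fun g _ hg => ?_
  rw [count_eq_zero_of_notMem (mt mem_toFinset.2 hg), zero_tsub]

lemma cmul_cons [DecidableEq G] (h : G) (S : Multiset G) :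
    cmul ℓ (h ::ₘ S) = cmul ℓ S + if ℓ ≤ S.count h then 1 else 0 := by
  have hcons : (h ::ₘ S).toFinset = insert h S.toFinset := toFinset_cons h S
  have hterm (g : G) : (h ::ₘ S).count g - ℓ
      = (S.count g - ℓ) + if g = h then (if ℓ ≤ S.count h then 1 else 0) else 0 := by
    rw [count_cons]
    split_ifs with hg <;> subst_vars <;> omega
  rw [cmul_eq_sum_of_subset ℓ hcons.subset,
    cmul_eq_sum_of_subset ℓ (Finset.subset_insert h S.toFinset)]
  simp_rw [hterm, Finset.sum_add_distrib, Finset.sum_ite_eq', Finset.mem_insert_self, if_true]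

lemma cmul_add_of_disjoint (hST : Disjoint S T) : cmul ℓ (S + T) = cmul ℓ S + cmul ℓ T := by
  classical
  rw [cmul_eq_sum_of_subset ℓ (toFinset_add S T).subset, Finset.sum_union (by simpa using hST),
    cmul_eq_sum_of_subset ℓ (Finset.Subset.refl S.toFinset),
    cmul_eq_sum_of_subset ℓ (Finset.Subset.refl T.toFinset)]
  congr 1 <;> refine Finset.sum_congr rfl fun g hg => ?_ <;> rw [mem_toFinset] at hg
  · rw [count_add, count_eq_zero_of_notMem (Multiset.disjoint_left.1 hST hg), add_zero]
  · rw [count_add, count_eq_zero_of_notMem (Multiset.disjoint_right.1 hST hg), zero_add]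

lemma cmul_map_of_injective {f : G → H} (hf : Function.Injective f) (S : Multiset G) :
    cmul ℓ (S.map f) = cmul ℓ S := by
  classical
  rw [cmul_eq_sum_of_subset ℓ (toFinset_map f S).subset, Finset.sum_image hf.injOn,
    cmul_eq_sum_of_subset ℓ (Finset.Subset.refl S.toFinset)]
  simp_rw [count_map_eq_count' f S hf]

lemma cmul_one_eq_zero_of_nodup (hS : S.Nodup) : cmul 1 S = 0 := by
  classical
  rw [cmul_eq_sum_of_subset 1 (Finset.Subset.refl S.toFinset)]
  exact Finset.sum_eq_zero fun g _ => tsub_eq_zero_of_le (nodup_iff_count_le_one.1 hS g)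

lemma cmul_replicate (d : ℕ) (g : G) : cmul ℓ (replicate d g) = d - ℓ := by
  classical
  have hsub : (replicate d g).toFinset ⊆ {g} := fun x hx =>
    Finset.mem_singleton.2 (eq_of_mem_replicate (mem_toFinset.1 hx))
  rw [cmul_eq_sum_of_subset ℓ hsub, Finset.sum_singleton, count_replicate_self]

lemma exists_eq_cons_cmul_le (hS : S ≠ 0) :
    ∃ h R, S = h ::ₘ R ∧ cmul ℓ R ≤ cmul ℓ S - 1 := by
  classical
  rcases Nat.eq_zero_or_pos (cmul ℓ S) with hzero | hpos
  · obtain ⟨h, hh⟩ := exists_mem_of_ne_zero hS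
    obtain ⟨R, rfl⟩ := exists_cons_of_mem hh
    refine ⟨h, R, rfl, ?_⟩
    rw [cmul_cons] at hzero
    omega
  · rw [cmul_eq_sum_of_subset ℓ (Finset.Subset.refl S.toFinset)] at hpos
    obtain ⟨h, hh, hcount⟩ := Finset.sum_pos_iff.1 hpos
    obtain ⟨R, rfl⟩ := exists_cons_of_mem (mem_toFinset.1 hh)
    refine ⟨h, R, rfl, ?_⟩
    rw [count_cons_self] at hcount
    rw [cmul_cons, if_pos (by omega), Nat.add_sub_cancel]

end CumulatedMultiplicity

section MinimalZeroSum

/-- Two partial sums of lengths `i < j < |S|` agree, and the terms in between sum to zero. -/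
lemma exists_lt_sum_eq_zero_of_card_lt {G : Type*} [AddCommGroup G] [Finite G] {S : Multiset G}
    (hS : Nat.card G < card S) : ∃ T < S, T ≠ 0 ∧ T.sum = 0 := by
  induction S using Quotient.inductionOn with
  | _ l =>
    obtain ⟨i, j, hij, heq⟩ : ∃ i j : Fin l.length, i < j ∧ (l.take i).sum = (l.take j).sum := by
      have := Fintype.ofFinite G
      obtain ⟨i, j, hne, heq⟩ := Fintype.exists_ne_map_eq_of_card_lt
        (fun i : Fin l.length => (l.take i).sum) (by simpa using hS)
      rcases hne.lt_or_gt with hij | hji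
      exacts [⟨i, j, hij, heq⟩, ⟨j, i, hji, heq.symm⟩]
    have hsplit : l.take i ++ (l.take j).drop i = l.take j := by
      conv_rhs => rw [← List.take_append_drop i (l.take j), List.take_take,
        min_eq_left (Fin.le_def.1 hij.le)]
    have hlength : ((l.take j).drop i).length = j - i := by
      rw [List.length_drop, List.length_take, min_eq_left j.2.le]
    refine ⟨((l.take j).drop i : List G), lt_of_le_of_ne ?_ fun hall => ?_, fun hnil => ?_, ?_⟩
    · exact ((List.drop_sublist _ _).trans (List.take_sublist _ _)).subperm
    · have := congrArg card hall
      rw [quot_mk_to_coe, coe_card, coe_card] at this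
      omega
    · rw [coe_eq_zero, ← List.length_eq_zero_iff] at hnil
      omega
    · rw [← hsplit, List.sum_append] at heq
      rw [sum_coe]
      exact left_eq_add.1 heq

namespace IsMinimalZeroSum

section AddCommMonoid

variable {G H : Type*} [AddCommMonoid G] [AddCommMonoid H] {S T : Multiset G}

lemma eq_of_le (hS : IsMinimalZeroSum S) (hT : T ≤ S) (hT0 : T ≠ 0) (hsum : T.sum = 0) :
    T = S :=
  of_not_not fun hne => hS.2.2 T hT hT0 hne hsum

lemma zero_notMem (hS : IsMinimalZeroSum S) (hcard : 1 < card S) : 0 ∉ S := fun hmem => by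
  have hsingleton := hS.eq_of_le (singleton_le.2 hmem) (singleton_ne_zero 0) (sum_singleton 0)
  rw [← hsingleton, card_singleton] at hcard
  exact hcard.false

lemma map (hS : IsMinimalZeroSum S) (f : G →+ H) (hf : Function.Injective f) :
    IsMinimalZeroSum (S.map f) := by
  refine ⟨mt Multiset.map_eq_zero.1 hS.1, by rw [← map_multiset_sum, hS.2.1, _root_.map_zero],
    fun T hT hT0 hTS hTsum => hTS ?_⟩
  obtain ⟨B, hB, rfl⟩ := exists_le_map_eq_of_le_map hT
  have hBsum : B.sum = 0 := hf (by rw [map_multiset_sum, hTsum, _root_.map_zero])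
  rw [hS.eq_of_le hB (mt Multiset.map_eq_zero.2 hT0) hBsum]

end AddCommMonoid

lemma card_le {G : Type*} [AddCommGroup G] [Finite G] {S : Multiset G}
    (hS : IsMinimalZeroSum S) : card S ≤ Nat.card G := by
  by_contra! hlt
  obtain ⟨T, hTS, hT0, hsum⟩ := exists_lt_sum_eq_zero_of_card_lt hlt
  exact hS.2.2 T hTS.le hT0 hTS.ne hsum

end IsMinimalZeroSum

lemma isMinimalZeroSum_singleton_zero {G : Type*} [AddCommMonoid G] :
    IsMinimalZeroSum ({0} : Multiset G) :=
  ⟨singleton_ne_zero 0, sum_singleton 0, fun _ hT hT0 hTS =>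
    ((le_singleton.1 hT).elim hT0 hTS).elim⟩

end MinimalZeroSum

section Constants

/-- `G` has a minimal zero-sum sequence of length `d` with cumulated multiplicity (of level one)
at most `k`; thus `SDk G k` is the supremum of these `d`. -/
def HasMinimalZeroSum (G : Type*) [AddCommMonoid G] (d k : ℕ) : Prop :=
  ∃ S : Multiset G, IsMinimalZeroSum S ∧ cmul 1 S ≤ k ∧ card S = d

namespace HasMinimalZeroSum

variable {G H : Type*} [AddCommMonoid G] [AddCommMonoid H] {d k k' : ℕ}

lemma mono (hG : HasMinimalZeroSum G d k) (hk : k ≤ k') : HasMinimalZeroSum G d k' := by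
  obtain ⟨S, hS, hcm, hcard⟩ := hG
  exact ⟨S, hS, hcm.trans hk, hcard⟩

lemma of_addEquiv (hG : HasMinimalZeroSum G d k) (φ : G ≃+ H) : HasMinimalZeroSum H d k := by
  obtain ⟨S, hS, hcm, hcard⟩ := hG
  refine ⟨S.map φ, hS.map φ.toAddMonoidHom φ.injective, ?_, by rwa [card_map]⟩
  rwa [cmul_map_of_injective 1 φ.injective]

end HasMinimalZeroSum

variable {G : Type*} [AddCommGroup G] [Finite G] {d k : ℕ}

lemma HasMinimalZeroSum.le_SDk (hG : HasMinimalZeroSum G d k) : d ≤ SDk G k := by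
  refine le_csSup ⟨Nat.card G, ?_⟩ hG
  rintro _ ⟨S, hS, -, rfl⟩
  exact hS.card_le

lemma SDk_le_DavenportD : SDk G k ≤ DavenportD G := by
  have hbdd : BddAbove {m | ∃ S : Multiset G, IsMinimalZeroSum S ∧ card S = m} := by
    refine ⟨Nat.card G, ?_⟩
    rintro _ ⟨S, hS, rfl⟩
    exact hS.card_le
  refine csSup_le' ?_
  rintro _ ⟨S, hS, -, rfl⟩
  exact le_csSup hbdd ⟨S, hS, rfl⟩

end Constants

section Adjoin

variable {H : Type*} {m : ℕ} {R A : Multiset H}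

/-- The sequence over `C_m ⊕ H` with terms `(0, x)` for `x` in `R` and `(1, a)` for `a` in `A`. It
is what becomes of the sequence `h R` over `H` when its term `h` is replaced by `m` terms whose
`H`-components `A` sum to `h`. -/
def adjoinCyclic (m : ℕ) (R A : Multiset H) : Multiset (ZMod m × H) :=
  R.map (Prod.mk 0) + A.map (Prod.mk 1)

lemma card_adjoinCyclic (m : ℕ) (R A : Multiset H) :
    card (adjoinCyclic m R A) = card R + card A := by
  rw [adjoinCyclic, card_add, card_map, card_map]

lemma exists_adjoinCyclic_eq_of_le {T : Multiset (ZMod m × H)} (hT : T ≤ adjoinCyclic m R A) :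
    ∃ B ≤ R, ∃ C ≤ A, adjoinCyclic m B C = T := by
  obtain ⟨T₀, hT₀, T₁, hT₁, rfl⟩ := exists_add_eq_of_le_add hT
  obtain ⟨B, hB, rfl⟩ := exists_le_map_eq_of_le_map hT₀
  obtain ⟨C, hC, rfl⟩ := exists_le_map_eq_of_le_map hT₁
  exact ⟨B, hB, C, hC, rfl⟩

variable [AddCommMonoid H]

lemma sum_adjoinCyclic (m : ℕ) (R A : Multiset H) :
    (adjoinCyclic m R A).sum = ((card A : ZMod m), R.sum + A.sum) := by
  have hsum (c : ZMod m) (B : Multiset H) : (B.map (Prod.mk c)).sum = (card B • c, B.sum) := by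
    induction B using Multiset.induction with
    | empty => simp [Prod.mk_zero_zero]
    | cons b B ih => simp [ih, add_mul, add_comm]
  rw [adjoinCyclic, sum_add, hsum, hsum, Prod.mk_add_mk, smul_zero, zero_add, nsmul_one]

lemma cmul_adjoinCyclic (hm : 1 < m) (ℓ : ℕ) (R A : Multiset H) :
    cmul ℓ (adjoinCyclic m R A) = cmul ℓ R + cmul ℓ A := by
  have : Fact (1 < m) := ⟨hm⟩
  have hdisj : Disjoint (R.map (Prod.mk (0 : ZMod m))) (A.map (Prod.mk (1 : ZMod m))) :=
    disjoint_map_map.2 fun x _ a _ heq => zero_ne_one (congrArg Prod.fst heq)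
  rw [adjoinCyclic, cmul_add_of_disjoint ℓ hdisj,
    cmul_map_of_injective ℓ (Prod.mk_right_injective 0),
    cmul_map_of_injective ℓ (Prod.mk_right_injective 1)]

/-- The `C_m`-component forces a zero-sum subsequence to contain none or all of the `m` terms
replacing `A.sum`. -/
lemma IsMinimalZeroSum.adjoinCyclic (hm : m ≠ 0) (hA : card A = m)
    (hS : IsMinimalZeroSum (A.sum ::ₘ R)) : IsMinimalZeroSum (adjoinCyclic m R A) := by
  refine ⟨fun hzero => ?_, ?_, fun T hT hT0 hTS hTsum => ?_⟩
  · have := congrArg card hzero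
    rw [card_adjoinCyclic, card_zero] at this
    omega
  · rw [sum_adjoinCyclic, hA, ZMod.natCast_self, add_comm, ← sum_cons, hS.2.1, Prod.mk_zero_zero]
  obtain ⟨B, hB, C, hC, rfl⟩ := exists_adjoinCyclic_eq_of_le hT
  rw [sum_adjoinCyclic, Prod.mk_eq_zero, ZMod.natCast_eq_zero_iff] at hTsum
  obtain ⟨hdvd, hsum⟩ := hTsum
  obtain rfl | hC0 := eq_or_ne C 0
  · have hB0 : B ≠ 0 := by
      rintro rfl
      exact hT0 rfl
    have hBR := hS.eq_of_le (hB.trans (le_cons_self R A.sum)) hB0 (by simpa using hsum)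
    exact (lt_cons_self R A.sum).not_ge (hBR ▸ hB)
  · have hCA : C = A :=
      eq_of_le_of_card_le hC (hA.trans_le (Nat.le_of_dvd (card_pos.2 hC0) hdvd))
    subst hCA
    have hBR := hS.eq_of_le (cons_le_cons C.sum hB) cons_ne_zero (by rw [sum_cons, add_comm, hsum])
    exact hTS (by rw [(cons_inj_right _).1 hBR])

lemma IsMinimalZeroSum.hasMinimalZeroSum_prod {S : Multiset H} (hS : IsMinimalZeroSum S)
    (hm : 1 < m) {c : ℕ}
    (hA : ∀ h ∈ S, ∃ A : Multiset H, card A = m ∧ A.sum = h ∧ cmul 1 A ≤ c) :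
    HasMinimalZeroSum (ZMod m × H) (card S + (m - 1)) (cmul 1 S - 1 + c) := by
  obtain ⟨h, R, rfl, hR⟩ := exists_eq_cons_cmul_le 1 hS.1
  obtain ⟨A, hAcard, rfl, hAcm⟩ := hA h (mem_cons_self h R)
  refine ⟨_, hS.adjoinCyclic (by omega) hAcard, ?_, ?_⟩
  · rw [cmul_adjoinCyclic hm]
    exact add_le_add hR hAcm
  · rw [card_adjoinCyclic, card_cons]
    omega

end Adjoin

section Multiples

variable {H : Type*} [AddCommGroup H]

/-- The multiples `0, f, …, (t - 1) f` together with one more term, chosen so that the whole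
sequence has sum `h`. -/
def multiplesWithSum (f h : H) (t : ℕ) : Multiset H :=
  (h - ((range t).map (· • f)).sum) ::ₘ (range t).map (· • f)

variable {f : H} {t : ℕ}

lemma card_multiplesWithSum (f h : H) (t : ℕ) : card (multiplesWithSum f h t) = t + 1 := by
  rw [multiplesWithSum, card_cons, card_map, card_range]

lemma sum_multiplesWithSum (f h : H) (t : ℕ) : (multiplesWithSum f h t).sum = h := by
  rw [multiplesWithSum, sum_cons, sub_add_cancel]

lemma nodup_map_nsmul_range (ht : t ≤ addOrderOf f) : ((range t).map (· • f)).Nodup :=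
  (nodup_range t).map_on fun _ hi _ hj =>
    nsmul_injOn_Iio_addOrderOf ((mem_range.1 hi).trans_le ht) ((mem_range.1 hj).trans_le ht)

lemma cmul_one_multiplesWithSum_le_one (ht : t ≤ addOrderOf f) (h : H) :
    cmul 1 (multiplesWithSum f h t) ≤ 1 := by
  classical
  rw [multiplesWithSum, cmul_cons, cmul_one_eq_zero_of_nodup (nodup_map_nsmul_range ht), zero_add]
  split_ifs <;> simp

lemma nodup_multiplesWithSum (ht : t ≤ addOrderOf f) {h : H}
    (hh : h ∉ AddSubgroup.zmultiples f) : (multiplesWithSum f h t).Nodup := by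
  have hmultiples : ∀ x ∈ (range t).map (· • f), x ∈ AddSubgroup.zmultiples f := by
    simp only [mem_map, forall_exists_index, and_imp, forall_apply_eq_imp_iff₂]
    exact fun j _ => AddSubgroup.nsmul_mem_zmultiples f j
  refine nodup_cons.2 ⟨fun hmem => hh ?_, nodup_map_nsmul_range ht⟩
  simpa using add_mem (hmultiples _ hmem) (AddSubgroup.multiset_sum_mem _ _ hmultiples)

end Multiples

section CyclicProducts

lemma exists_notMem_zmultiples_single {ι : Type*} [DecidableEq ι] [Nontrivial ι] {M : ι → Type*}
    [∀ i, AddGroup (M i)] (x : ∀ i, M i) {h : ∀ i, M i} (hh : h ≠ 0) :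
    ∃ j, h ∉ AddSubgroup.zmultiples (Pi.single j (x j)) := by
  obtain ⟨i, hi⟩ := Function.ne_iff.1 hh
  obtain ⟨j, hj⟩ := exists_ne i
  refine ⟨j, ?_⟩
  rintro ⟨c, rfl⟩
  simp [Pi.single_eq_of_ne hj.symm] at hi

lemma addOrderOf_single_one {ι : Type*} [DecidableEq ι] (n : ι → ℕ) (i : ι) :
    addOrderOf (Pi.single i 1 : ∀ i, ZMod (n i)) = n i := by
  have hsingle := addOrderOf_injective (AddMonoidHom.single (fun i => ZMod (n i)) i)
    (Pi.single_injective (M := fun i => ZMod (n i)) i) 1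
  rwa [ZMod.addOrderOf_one] at hsingle

lemma le_exponent_pi_zmod {ι : Type*} [Finite ι] (n : ι → ℕ) [∀ i, NeZero (n i)] (i : ι) :
    n i ≤ AddMonoid.exponent (∀ i, ZMod (n i)) := by
  classical
  rw [← addOrderOf_single_one n i]
  exact AddMonoid.addOrderOf_le_exponent AddMonoid.ExponentExists.of_finite _

lemma HasMinimalZeroSum.pi_of_prod {r d k : ℕ} {n : Fin (r + 1) → ℕ}
    (hG : HasMinimalZeroSum (ZMod (n 0) × ∀ i : Fin r, ZMod (n i.succ)) d k) :
    HasMinimalZeroSum (∀ i, ZMod (n i)) d k :=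
  hG.of_addEquiv (Fin.consLinearEquiv ℕ fun i => ZMod (n i)).toAddEquiv

lemma hasMinimalZeroSum_zmod_prod {m : ℕ} (hm : 1 < m) (H : Type*) [AddCommMonoid H] :
    HasMinimalZeroSum (ZMod m × H) m (m - 1) := by
  have hG := isMinimalZeroSum_singleton_zero.hasMinimalZeroSum_prod (H := H) hm (c := m - 1)
    fun h hh => ⟨replicate m 0, card_replicate m 0,
      by rw [sum_replicate, smul_zero, mem_singleton.1 hh], (cmul_replicate 1 m 0).le⟩
  rw [card_singleton, Nat.add_sub_cancel' hm.le] at hG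
  refine hG.mono ?_
  rw [cmul_one_eq_zero_of_nodup (nodup_singleton 0)]
  omega

lemma hasMinimalZeroSum_pi_fin_two {n : Fin 2 → ℕ} (hn : ∀ i, 1 < n i) (hle : n 0 ≤ n 1) :
    HasMinimalZeroSum (∀ i, ZMod (n i)) (1 + ∑ i, (n i - 1)) (n 1 - 1) := by
  have hn₀ := hn 0
  have hn₁ := hn 1
  obtain ⟨S, hS, hcm, hcard⟩ :=
    (hasMinimalZeroSum_zmod_prod hn₁ (∀ i : Fin 0, ZMod (n i.succ.succ))).pi_of_prod
      (n := fun i => n i.succ)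
  let f : ∀ i : Fin 1, ZMod (n i.succ) := Pi.single 0 1
  have hf : n 0 - 1 ≤ addOrderOf f := by
    rw [addOrderOf_single_one fun i : Fin 1 => n i.succ]
    exact (Nat.sub_le _ _).trans hle
  have hG := hS.hasMinimalZeroSum_prod hn₀ fun h _ =>
    ⟨multiplesWithSum f h (n 0 - 1), by rw [card_multiplesWithSum]; omega,
      sum_multiplesWithSum f h _, cmul_one_multiplesWithSum_le_one hf h⟩
  have hlength : 1 + ∑ i, (n i - 1) = card S + (n 0 - 1) := by
    rw [Fin.sum_univ_two]
    omega
  rw [hlength]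
  exact hG.pi_of_prod.mono (by omega)

lemma HasMinimalZeroSum.pi_cons {r d k : ℕ} {n : Fin (r + 3) → ℕ} (hn : 1 < n 0)
    (hle : ∀ i, n 0 ≤ n i) (hd : 1 < d)
    (hG : HasMinimalZeroSum (∀ i : Fin (r + 2), ZMod (n i.succ)) d k) :
    HasMinimalZeroSum (∀ i, ZMod (n i)) (d + (n 0 - 1)) (k - 1) := by
  obtain ⟨S, hS, hcm, rfl⟩ := hG
  have horder (j : Fin (r + 2)) :
      n 0 - 1 ≤ addOrderOf (Pi.single j 1 : ∀ i : Fin (r + 2), ZMod (n i.succ)) := by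
    rw [addOrderOf_single_one fun i : Fin (r + 2) => n i.succ]
    exact (Nat.sub_le _ _).trans (hle j.succ)
  refine (hS.hasMinimalZeroSum_prod hn (c := 0) fun h hh => ?_).pi_of_prod.mono
    (Nat.sub_le_sub_right hcm 1)
  have hh₀ : h ≠ 0 := fun hzero => hS.zero_notMem hd (hzero ▸ hh)
  obtain ⟨j, hj⟩ :=
    exists_notMem_zmultiples_single (fun i : Fin (r + 2) => (1 : ZMod (n i.succ))) hh₀
  have hnodup := nodup_multiplesWithSum (horder j) hj
  exact ⟨multiplesWithSum (Pi.single j 1) h (n 0 - 1), by rw [card_multiplesWithSum]; omega,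
    sum_multiplesWithSum _ h _, (cmul_one_eq_zero_of_nodup hnodup).le⟩

lemma hasMinimalZeroSum_pi_fin_add_two {r : ℕ} {n : Fin (r + 2) → ℕ} (hn : ∀ i, 1 < n i)
    (hmono : Monotone n) :
    HasMinimalZeroSum (∀ i, ZMod (n i)) (1 + ∑ i, (n i - 1)) (n (Fin.last _) - (r + 1)) := by
  induction r with
  | zero => exact hasMinimalZeroSum_pi_fin_two hn (hmono (Fin.zero_le 1))
  | succ r ih =>
    have htail := ih (n := fun i => n i.succ) (fun i => hn i.succ)
      (hmono.comp Fin.strictMono_succ.monotone)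
    have hlong : 1 < 1 + ∑ i : Fin (r + 2), (n i.succ - 1) := by
      rw [Fin.sum_univ_succ]
      have := hn (Fin.succ 0)
      omega
    rw [Fin.sum_univ_succ, add_left_comm, add_comm (n 0 - 1)]
    exact (htail.pi_cons (hn 0) (fun i => hmono (Fin.zero_le i)) hlong).mono (Nat.sub_sub _ _ _).le

lemma hasMinimalZeroSum_pi_of_large_rank {r N k : ℕ} {n : Fin r → ℕ} (hn : ∀ i, 1 < n i)
    (hmono : Monotone n) (hN : ∀ i, n i ≤ N) (hrank : N + 1 ≤ r + k) :
    HasMinimalZeroSum (∀ i, ZMod (n i)) (1 + ∑ i, (n i - 1)) k := by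
  match r with
  | 0 =>
    refine ⟨{0}, isMinimalZeroSum_singleton_zero, ?_, by simp⟩
    exact (cmul_one_eq_zero_of_nodup (nodup_singleton 0)).trans_le k.zero_le
  | 1 =>
    have hN₀ := hN 0
    rw [Fin.sum_univ_one, Nat.add_sub_cancel' (hn 0).le]
    exact (hasMinimalZeroSum_zmod_prod (hn 0) (∀ i : Fin 0, ZMod (n i.succ))).pi_of_prod.mono
      (by omega)
  | r + 2 =>
    have hlast := hN (Fin.last _)
    exact (hasMinimalZeroSum_pi_fin_add_two hn hmono).mono (by omega)

end CyclicProducts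

/-- Corollary: let `G ≅ C_{n_1} ⊕ … ⊕ C_{n_r}` (invariant factor decomposition,
so `1 < n_1 ∣ … ∣ n_r`) be a finite abelian group with `D(G) = D*(G)` and let
`k ∈ ℕ₀`. If `r(G) ≥ exp(G) + 1 − k`, then `SD_k(G) = D*(G)`. -/
theorem SDk_eq_Dstar_of_large_rank (r : ℕ) (n : Fin r → ℕ) (hn1 : ∀ i, 1 < n i)
    (hdvd : ∀ i j : Fin r, i ≤ j → n i ∣ n j) (k : ℕ)
    (hD : DavenportD (∀ i : Fin r, ZMod (n i)) = 1 + ∑ i, (n i - 1))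
    (hrk : AddMonoid.exponent (∀ i : Fin r, ZMod (n i)) + 1 ≤ r + k) :
    SDk (∀ i : Fin r, ZMod (n i)) k = 1 + ∑ i, (n i - 1) := by
  have (i : Fin r) : NeZero (n i) := ⟨(zero_lt_one.trans (hn1 i)).ne'⟩
  have hmono : Monotone n := fun i j hij => Nat.le_of_dvd (NeZero.pos (n j)) (hdvd i j hij)
  have hseq : HasMinimalZeroSum (∀ i, ZMod (n i)) (1 + ∑ i, (n i - 1)) k :=
    hasMinimalZeroSum_pi_of_large_rank hn1 hmono (le_exponent_pi_zmod n) hrk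
  exact le_antisymm (SDk_le_DavenportD.trans_eq hD) hseq.le_SDk
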